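/- The metric space (I_H, d_H') is complete and separable. -/

import Mathlib

/-!
Embedding the (countable, linearly ordered) set of blocks of `β` into `ℚ` turns `β` into a
nonnegative weight function `m ∈ ℓ¹(ℚ)`, a *labelling* of `β`; conversely every nonnegative
`m ∈ ℓ¹(ℚ)` labels some interval partition (`exists_isLabelling_of_summable`). Up to the choice of
labelling, `dHp` is comparable with the `ℓ¹` distance:

* if `m`, `m'` label `β`, `γ`, then `dHp β γ ≤ ‖m - m'‖₁` (`dHp_le_tsum`);
* if `m` labels `β` and `dHp β γ < δ`, then `γ` has a labelling `m'` with
  `‖m - m'‖₁ ≤ 2 δ` (`IsLabelling.exists_near`). A correspondence is a finite partial order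
  isomorphism, and it extends to an embedding of all blocks of `γ` because `ℚ` is dense without
  endpoints.

Completeness therefore follows from that of `ℓ¹(ℚ)`, by choosing successive labellings along a fast
subsequence of a Cauchy sequence, and separability from the density of finitely supported
rational-valued weights.
-/

open MeasureTheory Filter Topology Set

/-- An interval partition of `[0, L]`: a set of disjoint open subintervals whose
complement in `[0, L]` is Lebesgue-null. A block is encoded by its endpoint pair
`(a, b)` with `a < b`, representing the open interval `(a, b)`. -/
structure IntervalPartition where
  length : ℝ
  length_nonneg : 0 ≤ length
  blocks : Set (ℝ × ℝ)
  blocks_lt : ∀ p ∈ blocks, p.1 < p.2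
  blocks_sub : ∀ p ∈ blocks, 0 ≤ p.1 ∧ p.2 ≤ length
  blocks_disjoint : ∀ p ∈ blocks, ∀ q ∈ blocks, p ≠ q →
    Set.Ioo p.1 p.2 ∩ Set.Ioo q.1 q.2 = ∅
  compl_null : volume (Set.Icc 0 length \ ⋃ p ∈ blocks, Set.Ioo p.1 p.2) = 0

namespace IntervalPartition

/-- The mass (Lebesgue measure) of a block `(a, b)`. -/
def mass (p : ℝ × ℝ) : ℝ := p.2 - p.1

/-- The complement `C_β = [0, ‖β‖] \ ⋃_{U ∈ β} U`. -/
def cset (β : IntervalPartition) : Set ℝ :=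
  Set.Icc 0 β.length \ ⋃ p ∈ β.blocks, Set.Ioo p.1 p.2

/-- A correspondence between `β` and `γ`: a finite sequence of pairs of blocks,
strictly increasing in the left-to-right order in each coordinate. -/
def IsCorrespondence (β γ : IntervalPartition) (n : ℕ)
    (c : Fin n → (ℝ × ℝ) × (ℝ × ℝ)) : Prop :=
  (∀ j, (c j).1 ∈ β.blocks ∧ (c j).2 ∈ γ.blocks) ∧
  (∀ j k : Fin n, j < k → (c j).1.2 ≤ (c k).1.1 ∧ (c j).2.2 ≤ (c k).2.1)

/-- The Hausdorff distortion of a correspondence: the maximum of quantities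
(i) and (ii) of the paper. -/
noncomputable def hausDistortion (β γ : IntervalPartition) (n : ℕ)
    (c : Fin n → (ℝ × ℝ) × (ℝ × ℝ)) : ℝ :=
  max ((∑ j : Fin n, |mass (c j).1 - mass (c j).2|) + β.length - ∑ j : Fin n, mass (c j).1)
      ((∑ j : Fin n, |mass (c j).1 - mass (c j).2|) + γ.length - ∑ j : Fin n, mass (c j).2)

/-- The metric `d_H'`: infimum of the Hausdorff distortion over all correspondences. -/
noncomputable def dHp (β γ : IntervalPartition) : ℝ :=
  sInf {x | ∃ n, ∃ c : Fin n → (ℝ × ℝ) × (ℝ × ℝ),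
    IsCorrespondence β γ n c ∧ x = hausDistortion β γ n c}

/-- The metric `d_H`: the Hausdorff distance between the complements. -/
noncomputable def dH (β γ : IntervalPartition) : ℝ :=
  Metric.hausdorffDist β.cset γ.cset

/-- The number of blocks of mass `> h` ending at or before `t`. -/
noncomputable def divCount (β : IntervalPartition) (t h : ℝ) : ℕ :=
  Set.ncard {p : ℝ × ℝ | p ∈ β.blocks ∧ h < p.2 - p.1 ∧ p.2 ≤ t}

/-- `β` has `a`-diversity `d` at `t`:
`Γ(1-a) · lim_{h↓0} h^a · #{(x,y) ∈ β : y - x > h, y ≤ t} = d`. -/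
def HasDiversity (a : ℝ) (β : IntervalPartition) (t d : ℝ) : Prop :=
  Tendsto (fun h : ℝ => Real.Gamma (1 - a) * h ^ a * (divCount β t h : ℝ))
    (𝓝[>] 0) (𝓝 d)

/-- The `a`-diversity property: the diversity limit exists at every `t ∈ [0, ‖β‖]`. -/
def HasDiversityProp (a : ℝ) (β : IntervalPartition) : Prop :=
  ∀ t ∈ Set.Icc 0 β.length, ∃ d, HasDiversity a β t d

/-- The diversity function `𝒟_β(t)` (the value of the limit, when it exists). -/
noncomputable def diversity (a : ℝ) (β : IntervalPartition) (t : ℝ) : ℝ :=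
  limUnder (𝓝[>] (0:ℝ)) (fun h : ℝ => Real.Gamma (1 - a) * h ^ a * (divCount β t h : ℝ))

/-- The total diversity `𝒟_β(∞) = 𝒟_β(‖β‖)`. -/
noncomputable def totalDiversity (a : ℝ) (β : IntervalPartition) : ℝ :=
  diversity a β β.length

/-- The diversity `𝒟_β(U)` of a block `U`, evaluated at its midpoint. -/
noncomputable def blockDiversity (a : ℝ) (β : IntervalPartition) (p : ℝ × ℝ) : ℝ :=
  diversity a β ((p.1 + p.2) / 2)

/-- The `a`-distortion of a correspondence: the maximum of quantities (i)-(iv). -/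
noncomputable def alphaDistortion (a : ℝ) (β γ : IntervalPartition) (n : ℕ)
    (c : Fin n → (ℝ × ℝ) × (ℝ × ℝ)) : ℝ :=
  max (hausDistortion β γ n c)
    (max (⨆ j : Fin n, |blockDiversity a β (c j).1 - blockDiversity a γ (c j).2|)
         |totalDiversity a β - totalDiversity a γ|)

/-- The metric `d_α`: infimum of the `a`-distortion over all correspondences. -/
noncomputable def dA (a : ℝ) (β γ : IntervalPartition) : ℝ :=
  sInf {x | ∃ n, ∃ c : Fin n → (ℝ × ℝ) × (ℝ × ℝ),
    IsCorrespondence β γ n c ∧ x = alphaDistortion a β γ n c}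

end IntervalPartition

/-- A point of the space `J`: an interval partition `η` together with an increasing,
right-continuous function `f` that is constant on every block of `η`, on `[‖η‖, ∞)`,
and (as `f` is defined on `[0, ∞]`) on `(-∞, 0]`. -/
structure JPoint where
  part : IntervalPartition
  f : ℝ → ℝ
  f_nonneg : ∀ t, 0 ≤ f t
  f_mono : Monotone f
  f_rightCont : ∀ t, ContinuousWithinAt f (Set.Ici t) t
  f_const_block : ∀ p ∈ part.blocks, ∀ s ∈ Set.Ioo p.1 p.2, ∀ t ∈ Set.Ioo p.1 p.2, f s = f t
  f_const_top : ∀ t, part.length ≤ t → f t = f part.length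
  f_const_neg : ∀ t, t ≤ (0:ℝ) → f t = f 0

/-- The distortion of a correspondence between two points of `J`: as the
`a`-distortion, but with `f`, `g` in place of the diversity functions. -/
noncomputable def jDistortion (x y : JPoint) (n : ℕ)
    (c : Fin n → (ℝ × ℝ) × (ℝ × ℝ)) : ℝ :=
  max (IntervalPartition.hausDistortion x.part y.part n c)
    (max (⨆ j : Fin n, |x.f (((c j).1.1 + (c j).1.2) / 2) - y.f (((c j).2.1 + (c j).2.2) / 2)|)
         |x.f x.part.length - y.f y.part.length|)

/-- The metric `d_J` on `J`. -/
noncomputable def dJ (x y : JPoint) : ℝ :=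
  sInf {r | ∃ n, ∃ c : Fin n → (ℝ × ℝ) × (ℝ × ℝ),
    IntervalPartition.IsCorrespondence x.part y.part n c ∧ r = jDistortion x y n c}

namespace IntervalPartition

/-! ### Blocks of an interval partition -/

theorem block_sep (β : IntervalPartition) {p q : ℝ × ℝ} (hp : p ∈ β.blocks)
    (hq : q ∈ β.blocks) (h : p ≠ q) : p.2 ≤ q.1 ∨ q.2 ≤ p.1 := by
  by_contra! hc
  have hp' := β.blocks_lt p hp
  have hq' := β.blocks_lt q hq
  have hd := β.blocks_disjoint p hp q hq h
  rw [Ioo_inter_Ioo, Ioo_eq_empty_iff] at hd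
  exact hd (max_lt (lt_min hp' hc.2) (lt_min hc.1 hq'))

theorem block_eq (β : IntervalPartition) {p q : ℝ × ℝ} (hp : p ∈ β.blocks)
    (hq : q ∈ β.blocks) (h : p.1 = q.1) : p = q := by
  by_contra hne
  have hp' := β.blocks_lt p hp
  have hq' := β.blocks_lt q hq
  rcases β.block_sep hp hq hne with h1 | h1 <;> linarith

theorem block_le (β : IntervalPartition) {p q : ℝ × ℝ} (hp : p ∈ β.blocks)
    (hq : q ∈ β.blocks) (h : p.1 < q.1) : p.2 ≤ q.1 := by
  have hq' := β.blocks_lt q hq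
  rcases β.block_sep hp hq (fun e => by simp [e] at h) with h1 | h1 <;> linarith

theorem mass_pos (β : IntervalPartition) {p : ℝ × ℝ} (hp : p ∈ β.blocks) : 0 < mass p :=
  sub_pos.2 (β.blocks_lt p hp)

theorem pairwiseDisjoint_blocks (β : IntervalPartition) :
    β.blocks.PairwiseDisjoint (fun p => Ioo p.1 p.2) := fun p hp q hq hne =>
  Set.disjoint_iff_inter_eq_empty.2 (β.blocks_disjoint p hp q hq hne)

theorem countable_blocks (β : IntervalPartition) : β.blocks.Countable :=
  β.pairwiseDisjoint_blocks.countable_of_isOpen (fun _ _ => isOpen_Ioo)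
    (fun p hp => nonempty_Ioo.2 (β.blocks_lt p hp))

/-- The null-complement condition says exactly that the block masses sum to the length. -/
theorem hasSum_mass (β : IntervalPartition) :
    HasSum (fun p : β.blocks => mass p.1) β.length := by
  have hsub : (⋃ p ∈ β.blocks, Ioo p.1 p.2) ⊆ Icc 0 β.length := by
    refine iUnion₂_subset fun p hp => ?_
    have := β.blocks_sub p hp
    exact Ioo_subset_Icc_self.trans (Icc_subset_Icc this.1 this.2)
  have hvol : volume (⋃ p ∈ β.blocks, Ioo p.1 p.2) = ENNReal.ofReal β.length := by
    refine le_antisymm ((measure_mono hsub).trans (by simp)) ?_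
    calc ENNReal.ofReal β.length = volume (Icc 0 β.length) := by simp
      _ ≤ _ := measure_mono_ae (ae_le_set.2 β.compl_null)
  rw [measure_biUnion β.countable_blocks β.pairwiseDisjoint_blocks
    (fun _ _ => measurableSet_Ioo)] at hvol
  have h := ENNReal.hasSum_toReal (hvol.trans_ne ENNReal.ofReal_ne_top)
  rw [← ENNReal.tsum_toReal_eq (by simp), hvol, ENNReal.toReal_ofReal β.length_nonneg] at h
  convert h using 2 with p
  rw [Real.volume_Ioo]
  exact (ENNReal.toReal_ofReal (β.mass_pos p.2).le).symm

/-! ### Labellings by the rationals -/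

/-- `m` is the weight function of `β` under an order embedding of its blocks into `ℚ`: the label
of a block carries its mass and every other rational has weight `0`. The embedding is
encoded as a function `e` of the left endpoint of the block, which determines the block; its values
at other reals are irrelevant. -/
def IsLabelling (β : IntervalPartition) (m : ℚ → ℝ) : Prop :=
  ∃ e : ℝ → ℚ, StrictMonoOn e (Prod.fst '' β.blocks) ∧
    (∀ p ∈ β.blocks, m (e p.1) = mass p) ∧
    ∀ q, (∀ p ∈ β.blocks, e p.1 ≠ q) → m q = 0

theorem IsLabelling.hasSum {β : IntervalPartition} {m : ℚ → ℝ} (h : β.IsLabelling m) :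
    HasSum m β.length := by
  obtain ⟨e, he, hm, h0⟩ := h
  have hinj : Function.Injective (fun p : β.blocks => e p.1.1) := fun p q hpq =>
    Subtype.ext (β.block_eq p.2 q.2
      (he.injOn (mem_image_of_mem _ p.2) (mem_image_of_mem _ q.2) hpq))
  refine (hinj.hasSum_iff fun q hq => h0 q fun p hp hpq => hq ⟨⟨p, hp⟩, hpq⟩).1 ?_
  convert β.hasSum_mass using 2 with p
  exact hm p.1 p.2

theorem IsLabelling.nonneg {β : IntervalPartition} {m : ℚ → ℝ} (h : β.IsLabelling m) (q : ℚ) :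
    0 ≤ m q := by
  obtain ⟨e, he, hm, h0⟩ := h
  by_cases hq : ∃ p ∈ β.blocks, e p.1 = q
  · obtain ⟨p, hp, rfl⟩ := hq
    rw [hm p hp]
    exact (β.mass_pos hp).le
  · push Not at hq
    exact (h0 q hq).ge

/-- Inverse of the labelling: `u q` is the block with label `q` when `m q > 0`, and junk otherwise. -/
theorem IsLabelling.exists_block {β : IntervalPartition} {m : ℚ → ℝ} (h : β.IsLabelling m) :
    ∃ u : ℚ → ℝ × ℝ, (∀ q, 0 < m q → u q ∈ β.blocks ∧ mass (u q) = m q) ∧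
      ∀ q r, 0 < m q → 0 < m r → q < r → (u q).2 ≤ (u r).1 := by
  obtain ⟨e, he, hm, h0⟩ := h
  have hex : ∀ q, ∃ p : ℝ × ℝ, 0 < m q → p ∈ β.blocks ∧ e p.1 = q := by
    intro q
    by_cases hq : ∃ p ∈ β.blocks, e p.1 = q
    · obtain ⟨p, hp, hpq⟩ := hq
      exact ⟨p, fun _ => ⟨hp, hpq⟩⟩
    · push Not at hq
      exact ⟨0, fun hpos => absurd (h0 q hq) hpos.ne'⟩
  choose u hu using hex
  refine ⟨u, fun q hq => ⟨(hu q hq).1, ?_⟩, fun q r hq hr hqr => ?_⟩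
  · rw [← hm _ (hu q hq).1, (hu q hq).2]
  · refine β.block_le (hu q hq).1 (hu r hr).1 ?_
    rw [← he.lt_iff_lt (mem_image_of_mem _ (hu q hq).1) (mem_image_of_mem _ (hu r hr).1),
      (hu q hq).2, (hu r hr).2]
    exact hqr

/-! ### Correspondences and the `ℓ¹` distance of labellings -/

theorem IsCorrespondence.sum_mass_le {β γ : IntervalPartition} {n : ℕ}
    {c : Fin n → (ℝ × ℝ) × (ℝ × ℝ)} (h : IsCorrespondence β γ n c) :
    ∑ j, mass (c j).1 ≤ β.length := by
  have hinj : Function.Injective (fun j => (⟨(c j).1, (h.1 j).1⟩ : β.blocks)) := by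
    have key : ∀ j k, j < k → (c j).1 ≠ (c k).1 := fun j k hjk e => by
      have h1 := (h.2 j k hjk).1
      have h2 := β.blocks_lt _ (h.1 k).1
      rw [e] at h1
      linarith
    intro j k hjk
    have hjk' : (c j).1 = (c k).1 := congrArg Subtype.val hjk
    rcases lt_trichotomy j k with hlt | heq | hgt
    · exact absurd hjk' (key j k hlt)
    · exact heq
    · exact absurd hjk'.symm (key k j hgt)
  have := sum_le_hasSum (Finset.univ.map ⟨_, hinj⟩)
    (fun p _ => (β.mass_pos p.2).le) β.hasSum_mass
  simpa using this

theorem hausDistortion_nonneg {β γ : IntervalPartition} {n : ℕ}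
    {c : Fin n → (ℝ × ℝ) × (ℝ × ℝ)} (h : IsCorrespondence β γ n c) :
    0 ≤ hausDistortion β γ n c := by
  refine le_max_of_le_left ?_
  have h1 := h.sum_mass_le
  have h2 : 0 ≤ ∑ j, |mass (c j).1 - mass (c j).2| := Finset.sum_nonneg fun _ _ => abs_nonneg _
  linarith

theorem dHp_nonneg (β γ : IntervalPartition) : 0 ≤ dHp β γ := by
  refine Real.sInf_nonneg ?_
  rintro _ ⟨n, c, h, rfl⟩
  exact hausDistortion_nonneg h

theorem dHp_le {β γ : IntervalPartition} {n : ℕ}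
    {c : Fin n → (ℝ × ℝ) × (ℝ × ℝ)} (h : IsCorrespondence β γ n c) :
    dHp β γ ≤ hausDistortion β γ n c := by
  refine csInf_le ⟨0, ?_⟩ ⟨n, c, h, rfl⟩
  rintro _ ⟨n, c, h, rfl⟩
  exact hausDistortion_nonneg h

theorem exists_correspondence_lt {β γ : IntervalPartition} {δ : ℝ} (h : dHp β γ < δ) :
    ∃ n, ∃ c : Fin n → (ℝ × ℝ) × (ℝ × ℝ),
      IsCorrespondence β γ n c ∧ hausDistortion β γ n c < δ := by
  obtain ⟨_, ⟨n, c, hc, rfl⟩, hlt⟩ := exists_lt_of_csInf_lt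
    (⟨_, 0, fun j => j.elim0, ⟨fun j => j.elim0, fun j => j.elim0⟩, rfl⟩ :
      {x | ∃ n, ∃ c : Fin n → (ℝ × ℝ) × (ℝ × ℝ),
        IsCorrespondence β γ n c ∧ x = hausDistortion β γ n c}.Nonempty) h
  exact ⟨n, c, hc, hlt⟩

/-- Matching the blocks of equal label bounds `dHp` by the `ℓ¹` distance. Correspondences are
finite, so only labels in a finite set `G` carrying all but `ε` of both totals are used. -/
theorem dHp_le_tsum {β γ : IntervalPartition} {m m' : ℚ → ℝ} (h : β.IsLabelling m)
    (h' : γ.IsLabelling m') : dHp β γ ≤ ∑' q, |m q - m' q| := by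
  classical
  obtain ⟨u, hu, hu2⟩ := h.exists_block
  obtain ⟨v, hv, hv2⟩ := h'.exists_block
  have hsum : Summable fun q => |m q - m' q| := (h.hasSum.summable.sub h'.hasSum.summable).abs
  refine le_of_forall_pos_le_add fun ε hε => ?_
  obtain ⟨G, hG, hG'⟩ := ((h.hasSum.eventually_const_lt (sub_lt_self _ hε)).and
    (h'.hasSum.eventually_const_lt (sub_lt_self _ hε))).exists
  let F := G.filter fun q => 0 < m q ∧ 0 < m' q
  let o := F.orderEmbOfFin rfl
  have hF : ∀ j, 0 < m (o j) ∧ 0 < m' (o j) := fun j =>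
    (Finset.mem_filter.1 (F.orderEmbOfFin_mem rfl j)).2
  have hc : IsCorrespondence β γ F.card fun j => (u (o j), v (o j)) :=
    ⟨fun j => ⟨(hu _ (hF j).1).1, (hv _ (hF j).2).1⟩, fun j k hjk =>
      ⟨hu2 _ _ (hF j).1 (hF k).1 (o.strictMono hjk), hv2 _ _ (hF j).2 (hF k).2 (o.strictMono hjk)⟩⟩
  have hsumF : ∀ f : ℚ → ℝ, ∑ j, f (o j) = ∑ q ∈ F, f q := fun f => by
    have h1 := Finset.sum_map Finset.univ o.toEmbedding f
    rw [Finset.map_orderEmbOfFin_univ] at h1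
    exact h1.symm
  refine (dHp_le hc).trans ?_
  have e1 : ∀ j, mass (u (o j)) = m (o j) := fun j => (hu _ (hF j).1).2
  have e2 : ∀ j, mass (v (o j)) = m' (o j) := fun j => (hv _ (hF j).2).2
  simp only [hausDistortion, e1, e2]
  rw [hsumF fun q => |m q - m' q|, hsumF m, hsumF m']
  have hle := hsum.sum_le_tsum G fun q _ => abs_nonneg _
  -- off `F`, at most one of the two weights is nonzero
  have hm : ∑ q ∈ F, |m q - m' q| + ∑ q ∈ G, m q - ∑ q ∈ F, m q ≤ ∑ q ∈ G, |m q - m' q| := by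
    simp only [F, Finset.sum_filter]
    rw [← Finset.sum_add_distrib, ← Finset.sum_sub_distrib]
    refine Finset.sum_le_sum fun q _ => ?_
    have := h.nonneg q; have := h'.nonneg q
    split_ifs with hq
    · linarith
    · grind
  have hm' : ∑ q ∈ F, |m q - m' q| + ∑ q ∈ G, m' q - ∑ q ∈ F, m' q ≤ ∑ q ∈ G, |m q - m' q| := by
    simp only [F, Finset.sum_filter]
    rw [← Finset.sum_add_distrib, ← Finset.sum_sub_distrib]
    refine Finset.sum_le_sum fun q _ => ?_
    have := h.nonneg q; have := h'.nonneg q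
    split_ifs with hq
    · linarith
    · grind
  refine max_le ?_ ?_ <;> linarith

/-- A finite partial order isomorphism from a countable set of reals to `ℚ` extends to the whole set,
by Cantor's back-and-forth argument (only one direction is needed). -/
theorem exists_strictMonoOn_extend {A : Set ℝ} (hA : A.Countable) {n : ℕ} {a : Fin n → ℝ}
    {b : Fin n → ℚ} (haA : ∀ j, a j ∈ A) (ha : StrictMono a) (hb : StrictMono b) :
    ∃ e : ℝ → ℚ, StrictMonoOn e A ∧ ∀ j, e (a j) = b j := by
  classical
  have := hA.to_subtype
  cases nonempty_encodable A
  let f₀ : Order.PartialIso A ℚ := ⟨Finset.univ.image fun j => (⟨a j, haA j⟩, b j), by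
    intro p hp q hq
    simp only [Finset.mem_image, Finset.mem_univ, true_and] at hp hq
    obtain ⟨j, rfl⟩ := hp
    obtain ⟨k, rfl⟩ := hq
    have ha' : StrictMono fun j => (⟨a j, haA j⟩ : A) := fun _ _ h => ha h
    exact (ha'.cmp_map_eq j k).trans (hb.cmp_map_eq j k).symm⟩
  let I := Order.idealOfCofinals f₀ (Order.PartialIso.definedAtLeft (α := A) ℚ)
  let F a := Order.PartialIso.funOfIdeal a I (Order.cofinal_meets_idealOfCofinals _ _ a)
  have hcmp : ∀ p q : A × ℚ, (∃ f ∈ I, p ∈ f.val) → (∃ f ∈ I, q ∈ f.val) →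
      cmp p.1 q.1 = cmp p.2 q.2 := by
    rintro p q ⟨f, hf, hp⟩ ⟨g, hg, hq⟩
    obtain ⟨k, _, fk, gk⟩ := I.directed _ hf _ hg
    exact k.prop _ (fk hp) _ (gk hq)
  refine ⟨fun x => if hx : x ∈ A then (F ⟨x, hx⟩).1 else 0, fun x hx y hy hxy => ?_, fun j => ?_⟩
  · simp only [hx, hy, dif_pos]
    exact (lt_iff_lt_of_cmp_eq_cmp (hcmp (⟨x, hx⟩, _) (⟨y, hy⟩, _) (F _).2 (F _).2)).1 hxy
  · simp only [haA, dif_pos]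
    have h := hcmp (⟨a j, haA j⟩, _) (⟨a j, haA j⟩, b j) (F ⟨a j, haA j⟩).2
      ⟨f₀, Order.mem_idealOfCofinals _ _, by simpa [f₀] using ⟨j, rfl, rfl⟩⟩
    simp only [cmp_self_eq_eq] at h
    exact (cmp_eq_eq_iff _ _).1 h.symm

/-- Converse of `dHp_le_tsum` up to a factor `2`, keeping the labelling of `β` fixed: matched
blocks of `γ` receive the label of their partner, and the density of `ℚ` leaves room for the
remaining blocks of `γ`. -/
theorem IsLabelling.exists_near {β γ : IntervalPartition} {m : ℚ → ℝ} {δ : ℝ}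
    (h : β.IsLabelling m) (hd : dHp β γ < δ) :
    ∃ m', γ.IsLabelling m' ∧ ∑' q, |m q - m' q| ≤ 2 * δ := by
  classical
  obtain ⟨n, c, hc, hlt⟩ := exists_correspondence_lt hd
  obtain ⟨e, he, hm, h0⟩ := id h
  have hmono : StrictMono fun j => e (c j).1.1 := fun j k hjk => by
    have h1 := (hc.2 j k hjk).1
    have h2 := β.blocks_lt _ (hc.1 j).1
    exact he (mem_image_of_mem _ (hc.1 j).1) (mem_image_of_mem _ (hc.1 k).1) (by linarith)
  obtain ⟨e', he', hext⟩ := exists_strictMonoOn_extend (γ.countable_blocks.image Prod.fst)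
    (a := fun j => (c j).2.1) (fun j => mem_image_of_mem _ (hc.1 j).2)
    (fun j k hjk => by
      have h1 := (hc.2 j k hjk).2
      have h2 := γ.blocks_lt _ (hc.1 j).2
      show (c j).2.1 < (c k).2.1
      linarith) hmono
  let m' : ℚ → ℝ := fun q => if hq : ∃ p ∈ γ.blocks, e' p.1 = q then mass hq.choose else 0
  have hm' : ∀ p ∈ γ.blocks, m' (e' p.1) = mass p := fun p hp => by
    have hq : ∃ p' ∈ γ.blocks, e' p'.1 = e' p.1 := ⟨p, hp, rfl⟩
    simp only [m', dif_pos hq]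
    congr 1
    exact γ.block_eq hq.choose_spec.1 hp (he'.injOn (mem_image_of_mem _ hq.choose_spec.1)
      (mem_image_of_mem _ hp) hq.choose_spec.2)
  have hl : γ.IsLabelling m' := ⟨e', he', hm', fun q hq => dif_neg (by push Not; exact hq)⟩
  refine ⟨m', hl, ?_⟩
  have hsum : Summable fun q => |m q - m' q| := (h.hasSum.summable.sub hl.hasSum.summable).abs
  -- `m + m' - |m - m'| = 2 min m m'` is nonnegative, so its sum is at least that over the
  -- matched labels.
  have hS := (h.hasSum.add hl.hasSum).sub hsum.hasSum
  have hle := sum_le_hasSum (Finset.univ.map ⟨_, hmono.injective⟩) (fun q _ => by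
    have := h.nonneg q; have := hl.nonneg q
    grind) hS
  have e1 : ∀ j, m (e (c j).1.1) = mass (c j).1 := fun j => hm _ (hc.1 j).1
  have e2 : ∀ j, m' (e (c j).1.1) = mass (c j).2 := fun j => by
    rw [← hext, hm' _ (hc.1 j).2]
  simp only [Finset.sum_map, Function.Embedding.coeFn_mk, e1, e2, Finset.sum_sub_distrib,
    Finset.sum_add_distrib] at hle
  obtain ⟨hl1, hl2⟩ := max_lt_iff.1 hlt
  have hS0 : 0 ≤ ∑ j, |mass (c j).1 - mass (c j).2| := Finset.sum_nonneg fun _ _ => abs_nonneg _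
  linarith

/-! ### Partitions with prescribed weights -/

/-- Every nonnegative summable weight function on `ℚ` labels a partition: lay out intervals of
lengths `m q > 0` in the order of `ℚ`, the one with label `q` starting at `S q = ∑_{r < q} m r`. -/
theorem exists_isLabelling_of_summable {m : ℚ → ℝ} (hm : ∀ q, 0 ≤ m q) (hs : Summable m) :
    ∃ β : IntervalPartition, β.IsLabelling m := by
  classical
  let S : ℚ → ℝ := fun q => ∑' r, (Iio q).indicator m r
  have hS : ∀ q, HasSum ((Iio q).indicator m) (S q) := fun q => (hs.indicator _).hasSum
  have hS0 : ∀ q, 0 ≤ S q := fun q => tsum_nonneg fun r => indicator_nonneg (fun _ _ => hm _) r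
  have hSL : ∀ q, S q + m q ≤ ∑' r, m r := fun q =>
    hasSum_le (fun r => by
      have := hm r
      simp only [indicator_apply, mem_Iio]
      grind) ((hS q).add (hasSum_ite_eq q (m q))) hs.hasSum
  have hSS : ∀ q r, q < r → S q + m q ≤ S r := fun q r hqr =>
    hasSum_le (fun t => by
      have := hm t
      simp only [indicator_apply, mem_Iio]
      grind) ((hS q).add (hasSum_ite_eq q (m q))) (hS r)
  let supp : Set ℚ := {q | 0 < m q}
  let B : ℚ → ℝ × ℝ := fun q => (S q, S q + m q)
  have hSmono : StrictMonoOn S supp := fun q hq r _ hqr => by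
    have := hSS q r hqr
    have hq' : 0 < m q := hq
    linarith
  have hdisj : supp.PairwiseDisjoint fun q => Ioo (S q) (S q + m q) := by
    have key : ∀ q r, q < r → Disjoint (Ioo (S q) (S q + m q)) (Ioo (S r) (S r + m r)) :=
      fun q r hqr => Set.disjoint_left.2 fun x hx hx' => by
        have := hSS q r hqr
        have := hx.2; have := hx'.1
        linarith
    intro q _ r _ hne
    rcases lt_or_gt_of_ne hne with h | h
    · exact key q r h
    · exact (key r q h).symm
  have hvol : volume (⋃ p ∈ B '' supp, Ioo p.1 p.2) = ENNReal.ofReal (∑' q, m q) := by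
    rw [biUnion_image]
    rw [measure_biUnion supp.to_countable hdisj fun _ _ => measurableSet_Ioo,
      ENNReal.ofReal_tsum_of_nonneg hm hs]
    rw [tsum_subtype supp fun q => volume (Ioo (S q) (S q + m q))]
    refine tsum_congr fun q => ?_
    by_cases hq : q ∈ supp
    · simp [hq]
    · have : m q = 0 := le_antisymm (not_lt.1 hq) (hm q)
      simp [hq, this]
  have hsub : (⋃ p ∈ B '' supp, Ioo p.1 p.2) ⊆ Icc 0 (∑' q, m q) := by
    rw [biUnion_image]
    exact iUnion₂_subset fun q _ =>
      Ioo_subset_Icc_self.trans (Icc_subset_Icc (hS0 q) (hSL q))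
  refine ⟨{ length := ∑' q, m q
            length_nonneg := tsum_nonneg hm
            blocks := B '' supp
            blocks_lt := ?_
            blocks_sub := ?_
            blocks_disjoint := ?_
            compl_null := ?_ }, Function.invFunOn S supp, ?_, ?_, ?_⟩
  · rintro _ ⟨q, hq, rfl⟩
    exact lt_add_of_pos_right _ hq
  · rintro _ ⟨q, hq, rfl⟩
    exact ⟨hS0 q, hSL q⟩
  · rintro _ ⟨q, hq, rfl⟩ _ ⟨r, hr, rfl⟩ hne
    exact Set.disjoint_iff_inter_eq_empty.1 (hdisj hq hr fun h => hne (congrArg B h))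
  · rw [measure_sdiff hsub (MeasurableSet.biUnion (supp.to_countable.image B)
      fun _ _ => measurableSet_Ioo).nullMeasurableSet (by rw [hvol]; exact ENNReal.ofReal_ne_top),
      hvol]
    simp
  · rintro _ ⟨_, ⟨q, hq, rfl⟩, rfl⟩ _ ⟨_, ⟨r, hr, rfl⟩, rfl⟩ hlt
    simp only [B] at hlt ⊢
    rw [hSmono.injOn.leftInvOn_invFunOn hq, hSmono.injOn.leftInvOn_invFunOn hr]
    exact (hSmono.lt_iff_lt hq hr).1 hlt
  · rintro _ ⟨q, hq, rfl⟩
    simp only [B, mass]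
    rw [hSmono.injOn.leftInvOn_invFunOn hq]
    ring
  · intro q hq
    by_contra hne
    have hqs : q ∈ supp := lt_of_le_of_ne (hm q) (Ne.symm hne)
    exact hq _ (mem_image_of_mem B hqs) (hSmono.injOn.leftInvOn_invFunOn hqs)

/-- Extending the empty matching with the partition of length `0` labels any partition. -/
theorem exists_isLabelling (γ : IntervalPartition) : ∃ m, γ.IsLabelling m := by
  obtain ⟨β, hβ⟩ := exists_isLabelling_of_summable (m := fun _ => 0) (fun _ => le_rfl)
    summable_zero
  obtain ⟨m, hm, -⟩ := hβ.exists_near (lt_add_one (dHp β γ))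
  exact ⟨m, hm⟩

/-! ### Separability and completeness -/

/-- The dense set consists of one partition for each finitely supported rational weight function. -/
theorem exists_countable_dense : ∃ s : Set IntervalPartition, s.Countable ∧
    ∀ β : IntervalPartition, ∀ ε : ℝ, 0 < ε → ∃ γ ∈ s, dHp β γ < ε := by
  classical
  let w : (ℚ →₀ ℚ) → ℚ → ℝ := fun v q => max (v q : ℝ) 0
  have hw : ∀ v, Summable (w v) := fun v =>
    summable_of_ne_finset_zero (s := v.support) fun q hq => by
      simp [w, Finsupp.notMem_support_iff.1 hq]
  choose P hP using fun v => exists_isLabelling_of_summable (m := w v)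
    (fun q => le_max_right _ _) (hw v)
  refine ⟨range P, countable_range P, fun β ε hε => ?_⟩
  obtain ⟨m, hm⟩ := β.exists_isLabelling
  obtain ⟨G, hG⟩ := (hm.hasSum.eventually_const_lt
    (sub_lt_self β.length (half_pos hε))).exists
  have hη : 0 < ε / 2 / (G.card + 1) := by positivity
  have hr : ∀ q, ∃ r : ℚ, |m q - r| < ε / 2 / (G.card + 1) := fun q => by
    obtain ⟨r, h1, h2⟩ := exists_rat_btwn (lt_add_of_pos_right (m q) hη)
    exact ⟨r, by rw [abs_sub_lt_iff]; constructor <;> linarith⟩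
  choose r hr using hr
  let v : ℚ →₀ ℚ := Finsupp.onFinset G (fun q => if q ∈ G then r q else 0) (by
    intro q hq
    by_contra h
    simp [h] at hq)
  refine ⟨P v, mem_range_self v, ?_⟩
  have hsum : Summable fun q => |m q - w v q| := (hm.hasSum.summable.sub (hw v)).abs
  -- off `G` the two weight functions differ by `m`, on `G` by at most `ε / 2 / (G.card + 1)`
  have hle : ∑' q, |m q - w v q| ≤ β.length - ∑ q ∈ G, m q + ∑ q ∈ G, ε / 2 / (G.card + 1) := by
    have hfin : ∀ c : ℚ → ℝ, HasSum (fun q => if q ∈ G then c q else 0) (∑ q ∈ G, c q) := by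
      intro c
      have h := hasSum_sum_of_ne_finset_zero (f := fun q => if q ∈ G then c q else 0) (s := G)
        (L := SummationFilter.unconditional ℚ) (fun q hq => if_neg hq)
      rwa [Finset.sum_congr rfl fun q hq => if_pos hq] at h
    refine hasSum_le (fun q => ?_) hsum.hasSum ((hm.hasSum.sub (hfin m)).add (hfin _))
    have h0 := hm.nonneg q
    by_cases hq : q ∈ G
    · have h1 : |m q - max (r q : ℝ) 0| ≤ |m q - r q| := by
        have := abs_max_sub_max_le_abs (m q) (r q : ℝ) 0
        rwa [max_eq_left h0] at this
      simpa [w, v, hq] using h1.trans (hr q).le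
    · simp [w, v, hq, abs_of_nonneg h0]
  have hG2 : ∑ q ∈ G, ε / 2 / ((G.card : ℝ) + 1) ≤ ε / 2 := by
    rw [Finset.sum_const, nsmul_eq_mul, mul_div_assoc', div_le_iff₀ (by positivity)]
    nlinarith
  linarith [dHp_le_tsum hm (hP v)]

/-- Labellings along a fast subsequence, chosen inductively to be close to their predecessors,
converge in `ℓ¹(ℚ)`; the limit labels the limit partition. Later terms off the subsequence are
handled by relabelling them near a subsequence term, so no triangle inequality for `dHp` is used. -/
theorem exists_tendsto_of_cauchy (x : ℕ → IntervalPartition)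
    (hx : ∀ ε : ℝ, 0 < ε → ∃ N : ℕ, ∀ m ≥ N, ∀ n ≥ N, dHp (x m) (x n) < ε) :
    ∃ y : IntervalPartition, Tendsto (fun n => dHp (x n) y) atTop (𝓝 0) := by
  have hN : ∀ k : ℕ, ∃ N : ℕ, ∀ m ≥ N, ∀ n ≥ N, dHp (x m) (x n) < (1 / 2) ^ k :=
    fun k => hx _ (by positivity)
  choose N hN using hN
  -- partial sums of `N` give a monotone sequence dominating `N`
  let φ : ℕ → ℕ := fun k => ∑ i ∈ Finset.range (k + 1), N i
  have hφN : ∀ k, N k ≤ φ k := fun k => by simp [φ, Finset.sum_range_succ]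
  have hφ : ∀ k, φ k ≤ φ (k + 1) := fun k => by simp [φ, Finset.sum_range_succ _ (k + 1)]
  have hstep : ∀ k n, φ k ≤ n → dHp (x (φ k)) (x n) < (1 / 2) ^ k := fun k n hn =>
    hN k _ (hφN k) _ ((hφN k).trans hn)
  choose g hg hgd using fun (k : ℕ) (m : {m // (x (φ k)).IsLabelling m}) =>
    m.2.exists_near (hstep k (φ (k + 1)) (hφ k))
  obtain ⟨m₀, hm₀⟩ := (x (φ 0)).exists_isLabelling
  let M : ∀ k, {m // (x (φ k)).IsLabelling m} :=
    fun k => Nat.rec ⟨m₀, hm₀⟩ (fun k m => ⟨g k m, hg k m⟩) k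
  have hM : ∀ k, ∑' q, |(M k).1 q - (M (k + 1)).1 q| ≤ 2 * (1 / 2) ^ k := fun k => hgd k (M k)
  have hmem : ∀ f : ℚ → ℝ, Summable f → Memℓp f 1 := fun f hf =>
    memℓp_gen (by simpa using hf.abs)
  let F : ℕ → lp (fun _ : ℚ => ℝ) 1 := fun k => ⟨(M k).1, hmem _ (M k).2.hasSum.summable⟩
  have hnorm : ∀ f : lp (fun _ : ℚ => ℝ) 1, ‖f‖ = ∑' q, |f q| := fun f => by
    simpa using lp.norm_eq_tsum_rpow (p := 1) (by simp) f
  have hFc : CauchySeq F := by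
    refine cauchySeq_of_le_geometric (1 / 2) 2 (by norm_num) fun k => ?_
    rw [dist_eq_norm, hnorm]
    exact hM k
  obtain ⟨f, hf⟩ := cauchySeq_tendsto_of_complete hFc
  have hfs : Summable (f : ℚ → ℝ) := by
    have := (lp.memℓp f).summable (by simp)
    exact Summable.of_norm (by simpa using this)
  have hf0 : ∀ q, 0 ≤ f q := fun q => by
    have h1 : Tendsto (fun k => F k q) atTop (𝓝 (f q)) :=
      ((lp.lipschitzWith_one_eval 1 q).continuous.tendsto f).comp hf
    exact ge_of_tendsto' h1 fun k => (M k).2.nonneg q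
  obtain ⟨y, hy⟩ := exists_isLabelling_of_summable hf0 hfs
  refine ⟨y, Metric.tendsto_atTop.2 fun ε hε => ?_⟩
  have h1 : Tendsto (fun k : ℕ => 2 * (1 / 2 : ℝ) ^ k + ‖F k - f‖) atTop (𝓝 0) := by
    simpa using ((tendsto_pow_atTop_nhds_zero_of_lt_one (r := (1 / 2 : ℝ)) (by norm_num)
      (by norm_num)).const_mul 2).add (tendsto_iff_norm_sub_tendsto_zero.1 hf)
  obtain ⟨k, hk⟩ := (h1.eventually_lt_const hε).exists
  refine ⟨φ k, fun n hn => ?_⟩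
  rw [Real.dist_eq, sub_zero, abs_of_nonneg (dHp_nonneg _ _)]
  -- a labelling of `x n` close to the chosen labelling of `x (φ k)`, hence close to `f`
  obtain ⟨m, hm, hmd⟩ := (M k).2.exists_near (hstep k n hn)
  let h : lp (fun _ : ℚ => ℝ) 1 := ⟨m, hmem _ hm.hasSum.summable⟩
  calc dHp (x n) y ≤ ∑' q, |m q - f q| := dHp_le_tsum hm hy
    _ = ‖h - f‖ := by rw [hnorm]; rfl
    _ ≤ ‖h - F k‖ + ‖F k - f‖ := norm_sub_le_norm_sub_add_norm_sub _ _ _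
    _ = (∑' q, |(M k).1 q - m q|) + ‖F k - f‖ := by rw [norm_sub_rev h, hnorm (F k - h)]; rfl
    _ ≤ 2 * (1 / 2) ^ k + ‖F k - f‖ := by gcongr
    _ < ε := hk

end IntervalPartition

open IntervalPartition in
/-- `(I_H, d_H')` is complete (every `d_H'`-Cauchy sequence has a
`d_H'`-limit) and separable (there is a countable `d_H'`-dense set). -/
theorem dHp_complete_separable :
    (∀ x : ℕ → IntervalPartition,
      (∀ ε : ℝ, 0 < ε → ∃ N : ℕ, ∀ m ≥ N, ∀ n ≥ N, dHp (x m) (x n) < ε) →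
      ∃ y : IntervalPartition, Tendsto (fun n => dHp (x n) y) atTop (𝓝 0)) ∧
    (∃ s : Set IntervalPartition, s.Countable ∧
      ∀ β : IntervalPartition, ∀ ε : ℝ, 0 < ε → ∃ γ ∈ s, dHp β γ < ε) := by
  exact ⟨exists_tendsto_of_cauchy, exists_countable_dense⟩
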